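/- (Lemma 3.2, inequality (3.3)) Let (D, F) be a good pair, X ⊆ ℝⁿ convex compact, A affine with A(X) ⊆ M, g ∈ ℝⁿ, and define 2Φ_*(r) = sup_{x,y∈X} inf_{φ∈F, α>0} Φ_r(x, y; φ, α). Then for every ε ∈ (0, 1/4), the minimax optimal risk satisfies Risk_*(ε) ≥ [ln(1/(4ε)) / (2·ln(2/ε))] · Φ_*(ln(2/ε)). -/

import Mathlib

open MeasureTheory Real Matrix Set
open scoped ENNReal

/-- A "good pair" `(𝒟, ℱ)` in the sense of Juditsky–Nemirovski:
a parametric family of positive probability densities `p μ`, `μ ∈ M`, on `(Ω, P)`,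
together with a finite-dimensional linear space `F` of Borel functions on `Ω`
containing the constants, such that log-likelihood ratios belong to `F` and
`μ ↦ ln ∫ e^{φ} p_μ dP` is well defined (finite, witnessed by integrability)
and concave on `M` for every `φ ∈ F`. -/
structure GoodPair (Ω : Type*) [MeasurableSpace Ω] (P : Measure Ω)
    (E : Type*) [NormedAddCommGroup E] [NormedSpace ℝ E] where
  M : Set E
  p : E → Ω → ℝ
  F : Submodule ℝ (Ω → ℝ)
  M_open : IsOpen M
  M_convex : Convex ℝ M
  p_meas : ∀ μ ∈ M, Measurable (p μ)
  p_pos : ∀ μ ∈ M, ∀ ω, 0 < p μ ω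
  p_prob : ∀ μ ∈ M, ∫ ω, p μ ω ∂P = 1
  F_fd : FiniteDimensional ℝ F
  F_meas : ∀ φ ∈ F, Measurable φ
  F_const : ∀ c : ℝ, (fun _ : Ω => c) ∈ F
  logratio_mem : ∀ μ ∈ M, ∀ ν ∈ M, (fun ω => Real.log (p μ ω / p ν ω)) ∈ F
  F_finite : ∀ φ ∈ F, ∀ μ ∈ M, Integrable (fun ω => Real.exp (φ ω) * p μ ω) P
  F_concave : ∀ φ ∈ F,
    ConcaveOn ℝ M (fun μ => Real.log (∫ ω, Real.exp (φ ω) * p μ ω ∂P))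

variable {Ω : Type*} [MeasurableSpace Ω] {P : Measure Ω}
  {E : Type*} [NormedAddCommGroup E] [NormedSpace ℝ E] {n : ℕ}

/-- The distribution of the observation when the parameter is `μ`:
the measure with density `p μ` with respect to `P`. -/
noncomputable def obsMeasure (D : GoodPair Ω P E) (μ : E) : Measure Ω :=
  P.withDensity fun ω => ENNReal.ofReal (D.p μ ω)

/-- The `ε`-risk of an estimate `ghat` of the linear form `gᵀx`, `x ∈ X`:
`inf {δ | sup_{x ∈ X} Prob_{ω ∼ p_{A(x)}·P} {|ghat ω - gᵀx| > δ} < ε}`. -/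
noncomputable def Risk (D : GoodPair Ω P E) (A : (Fin n → ℝ) →ᵃ[ℝ] E)
    (g : Fin n → ℝ) (X : Set (Fin n → ℝ)) (ghat : Ω → ℝ) (ε : ℝ) : ℝ :=
  sInf {δ : ℝ |
    (⨆ x ∈ X, obsMeasure D (A x) {ω | δ < |ghat ω - g ⬝ᵥ x|}) < ENNReal.ofReal ε}

/-- The minimax optimal `ε`-risk over all (Borel) estimates. -/
noncomputable def RiskStar (D : GoodPair Ω P E) (A : (Fin n → ℝ) →ᵃ[ℝ] E)
    (g : Fin n → ℝ) (X : Set (Fin n → ℝ)) (ε : ℝ) : ℝ :=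
  sInf {ρ : ℝ | ∃ ghat : Ω → ℝ, Measurable ghat ∧ ρ = Risk D A g X ghat ε}

/-- The minimax optimal `ε`-risk over affine estimates, i.e. estimates `φ ∈ F`. -/
noncomputable def RiskAff (D : GoodPair Ω P E) (A : (Fin n → ℝ) →ᵃ[ℝ] E)
    (g : Fin n → ℝ) (X : Set (Fin n → ℝ)) (ε : ℝ) : ℝ :=
  sInf {ρ : ℝ | ∃ φ ∈ D.F, ρ = Risk D A g X φ ε}

/-- The function `Φ_r(x, y; φ, α)`. -/
noncomputable def PhiFun (D : GoodPair Ω P E) (A : (Fin n → ℝ) →ᵃ[ℝ] E)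
    (g : Fin n → ℝ) (r : ℝ) (x y : Fin n → ℝ) (φ : Ω → ℝ) (α : ℝ) : ℝ :=
  g ⬝ᵥ x - g ⬝ᵥ y
    + α * Real.log (∫ ω, Real.exp (φ ω / α) * D.p (A y) ω ∂P)
    + α * Real.log (∫ ω, Real.exp (-φ ω / α) * D.p (A x) ω ∂P)
    + 2 * α * r

/-- `Φ_*(r)` defined through the sup-inf value:
`2Φ_*(r) = sup_{x,y ∈ X} inf_{φ ∈ F, α > 0} Φ_r(x, y; φ, α)`. -/
noncomputable def PhiStarSI (D : GoodPair Ω P E) (A : (Fin n → ℝ) →ᵃ[ℝ] E)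
    (g : Fin n → ℝ) (X : Set (Fin n → ℝ)) (r : ℝ) : ℝ :=
  (1/2) * sSup {v : ℝ | ∃ x ∈ X, ∃ y ∈ X,
    v = sInf {w : ℝ | ∃ φ ∈ D.F, ∃ α : ℝ, 0 < α ∧ w = PhiFun D A g r x y φ α}}

/-- `Φ_*(r)` defined through the inf-sup value:
`2Φ_*(r) = inf_{φ ∈ F, α > 0} sup_{x,y ∈ X} Φ_r(x, y; φ, α)`. -/
noncomputable def PhiStarIS (D : GoodPair Ω P E) (A : (Fin n → ℝ) →ᵃ[ℝ] E)
    (g : Fin n → ℝ) (X : Set (Fin n → ℝ)) (r : ℝ) : ℝ :=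
  (1/2) * sInf {v : ℝ | ∃ φ ∈ D.F, ∃ α : ℝ, 0 < α ∧
    v = sSup {w : ℝ | ∃ x ∈ X, ∃ y ∈ X, w = PhiFun D A g r x y φ α}}

/-- The Hellinger affinity `∫ √(p_μ p_ν) dP` of two members of the family. -/
noncomputable def hellingerAffinity (D : GoodPair Ω P E) (μ ν : E) : ℝ :=
  ∫ ω, √(D.p μ ω) * √(D.p ν ω) ∂P

/-- The Cauchy–Schwarz inequality for real-valued functions. -/
lemma sq_integral_mul_le {Q : Measure Ω} {u v : Ω → ℝ}
    (hu : Integrable (fun ω => u ω ^ 2) Q) (hv : Integrable (fun ω => v ω ^ 2) Q)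
    (huv : Integrable (fun ω => u ω * v ω) Q) :
    (∫ ω, u ω * v ω ∂Q) ^ 2 ≤ (∫ ω, u ω ^ 2 ∂Q) * ∫ ω, v ω ^ 2 ∂Q := by
  have key : ∀ t : ℝ, 0 ≤ (∫ ω, u ω ^ 2 ∂Q) * (t * t) + (2 * ∫ ω, u ω * v ω ∂Q) * t
      + ∫ ω, v ω ^ 2 ∂Q := by
    intro t
    have h : ∫ ω, (t * u ω + v ω) ^ 2 ∂Q = (∫ ω, u ω ^ 2 ∂Q) * (t * t)
        + (2 * ∫ ω, u ω * v ω ∂Q) * t + ∫ ω, v ω ^ 2 ∂Q := by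
      have : (fun ω => (t * u ω + v ω) ^ 2)
          = fun ω => (t * t) * u ω ^ 2 + (2 * t) * (u ω * v ω) + v ω ^ 2 := by
        ext ω; ring
      rw [this, integral_add ((hu.const_mul _).fun_add (huv.const_mul _)) hv,
        integral_add (hu.const_mul _) (huv.const_mul _), integral_const_mul, integral_const_mul]
      ring
    rw [← h]
    exact integral_nonneg fun ω => sq_nonneg _
  have := discrim_le_zero key
  rw [discrim] at this
  linarith

namespace GoodPair

variable (D : GoodPair Ω P E) {μ ν : E}

lemma integrable_p (hμ : μ ∈ D.M) : Integrable (D.p μ) P := by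
  simpa using D.F_finite 0 D.F.zero_mem μ hμ

lemma integrable_sqrt_mul_sqrt (hμ : μ ∈ D.M) (hν : ν ∈ D.M) :
    Integrable (fun ω => √(D.p μ ω) * √(D.p ν ω)) P := by
  refine ((D.integrable_p hμ).add (D.integrable_p hν)).mono'
    ((D.p_meas μ hμ).sqrt.mul (D.p_meas ν hν).sqrt).aestronglyMeasurable (ae_of_all _ fun ω => ?_)
  have h1 := Real.sq_sqrt (D.p_pos μ hμ ω).le
  have h2 := Real.sq_sqrt (D.p_pos ν hν ω).le
  rw [Real.norm_of_nonneg (by positivity), Pi.add_apply]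
  nlinarith [sq_nonneg (√(D.p μ ω) - √(D.p ν ω)), sq_nonneg (√(D.p μ ω) + √(D.p ν ω))]

lemma measure_ne_zero (hμ : μ ∈ D.M) : P ≠ 0 := by
  rintro rfl
  simpa using D.p_prob μ hμ

lemma integral_exp_mul_pos (hμ : μ ∈ D.M) {φ : Ω → ℝ} (hφ : φ ∈ D.F) :
    0 < ∫ ω, Real.exp (φ ω) * D.p μ ω ∂P := by
  have hpos : ∀ ω, 0 < Real.exp (φ ω) * D.p μ ω := fun ω =>
    mul_pos (Real.exp_pos _) (D.p_pos μ hμ ω)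
  rw [integral_pos_iff_support_of_nonneg (fun ω => (hpos ω).le) (D.F_finite φ hφ μ hμ),
    Function.support_eq_univ fun ω => (hpos ω).ne']
  exact Measure.measure_univ_pos.2 (D.measure_ne_zero hμ)

lemma hellingerAffinity_pos (hμ : μ ∈ D.M) (hν : ν ∈ D.M) : 0 < hellingerAffinity D μ ν := by
  have hpos : ∀ ω, 0 < √(D.p μ ω) * √(D.p ν ω) := fun ω =>
    mul_pos (Real.sqrt_pos.2 (D.p_pos μ hμ ω)) (Real.sqrt_pos.2 (D.p_pos ν hν ω))
  rw [hellingerAffinity, integral_pos_iff_support_of_nonneg (fun ω => (hpos ω).le)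
    (D.integrable_sqrt_mul_sqrt hμ hν), Function.support_eq_univ fun ω => (hpos ω).ne']
  exact Measure.measure_univ_pos.2 (D.measure_ne_zero hμ)

lemma hellingerAffinity_self (hμ : μ ∈ D.M) : hellingerAffinity D μ μ = 1 := by
  rw [hellingerAffinity, ← D.p_prob μ hμ]
  congr 1 with ω
  exact Real.mul_self_sqrt (D.p_pos μ hμ ω).le

/-- The log-affinity is bounded above by each of the concave functions defining it. -/
lemma two_mul_log_hellingerAffinity_le (hμ : μ ∈ D.M) (hν : ν ∈ D.M) {φ : Ω → ℝ}
    (hφ : φ ∈ D.F) :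
    2 * Real.log (hellingerAffinity D μ ν)
      ≤ Real.log (∫ ω, Real.exp (φ ω) * D.p ν ω ∂P)
        + Real.log (∫ ω, Real.exp ((-φ) ω) * D.p μ ω ∂P) := by
  have hφ' : -φ ∈ D.F := D.F.neg_mem hφ
  have hv : ∀ ω, (Real.exp (φ ω / 2) * √(D.p ν ω)) ^ 2 = Real.exp (φ ω) * D.p ν ω := fun ω => by
    rw [mul_pow, Real.sq_sqrt (D.p_pos ν hν ω).le, ← Real.exp_nat_mul]
    congr 2
    push_cast
    ring
  have hu : ∀ ω, (Real.exp (-φ ω / 2) * √(D.p μ ω)) ^ 2 = Real.exp ((-φ) ω) * D.p μ ω :=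
    fun ω => by
      rw [mul_pow, Real.sq_sqrt (D.p_pos μ hμ ω).le, ← Real.exp_nat_mul, Pi.neg_apply]
      congr 2
      push_cast
      ring
  have huv : ∀ ω, (Real.exp (-φ ω / 2) * √(D.p μ ω)) * (Real.exp (φ ω / 2) * √(D.p ν ω))
      = √(D.p μ ω) * √(D.p ν ω) := fun ω => by
    have : Real.exp (-φ ω / 2) * Real.exp (φ ω / 2) = 1 := by
      rw [← Real.exp_add, neg_div, neg_add_cancel, Real.exp_zero]
    linear_combination (√(D.p μ ω) * √(D.p ν ω)) * this
  have h := sq_integral_mul_le (Q := P) (u := fun ω => Real.exp (-φ ω / 2) * √(D.p μ ω))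
    (v := fun ω => Real.exp (φ ω / 2) * √(D.p ν ω))
    (by simpa only [hu] using D.F_finite _ hφ' μ hμ)
    (by simpa only [hv] using D.F_finite _ hφ ν hν)
    (by simpa only [huv] using D.integrable_sqrt_mul_sqrt hμ hν)
  simp only [hu, hv, huv] at h
  have hpos := D.hellingerAffinity_pos hμ hν
  have h' := Real.log_le_log (pow_pos hpos 2) h
  rw [Real.log_mul (D.integral_exp_mul_pos hμ hφ').ne' (D.integral_exp_mul_pos hν hφ).ne',
    Real.log_pow] at h'
  push_cast at h'
  linarith

/-- Half the log-likelihood ratio attains the variational bound on the log-affinity. -/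
lemma exists_two_mul_log_hellingerAffinity_eq (hμ : μ ∈ D.M) (hν : ν ∈ D.M) :
    ∃ φ ∈ D.F, (∫ ω, Real.exp (φ ω) * D.p ν ω ∂P) = hellingerAffinity D μ ν ∧
      (∫ ω, Real.exp ((-φ) ω) * D.p μ ω ∂P) = hellingerAffinity D μ ν := by
  refine ⟨(1 / 2 : ℝ) • fun ω => Real.log (D.p μ ω / D.p ν ω),
    D.F.smul_mem _ (D.logratio_mem μ hμ ν hν), ?_, ?_⟩
  all_goals
    rw [hellingerAffinity]
    congr 1 with ω
    have hp := D.p_pos μ hμ ω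
    have hq := D.p_pos ν hν ω
    have h1 := Real.sqrt_pos.2 hp
    have h2 := Real.sqrt_pos.2 hq
    simp only [Pi.neg_apply, Pi.smul_apply, smul_eq_mul]
    rw [one_div_mul_eq_div, ← Real.log_sqrt (by positivity), Real.sqrt_div hp.le]
  · rw [Real.exp_log (by positivity)]
    nth_rewrite 2 [← Real.mul_self_sqrt hq.le]
    field_simp
  · rw [Real.exp_neg, Real.exp_log (by positivity)]
    nth_rewrite 2 [← Real.mul_self_sqrt hp.le]
    field_simp

lemma concaveOn_log_hellingerAffinity (hν : ν ∈ D.M) :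
    ConcaveOn ℝ D.M fun μ => Real.log (hellingerAffinity D μ ν) := by
  refine ⟨D.M_convex, fun a ha b hb s t hs ht hst => ?_⟩
  have hc : s • a + t • b ∈ D.M := D.M_convex ha hb hs ht hst
  obtain ⟨φ, hφ, h1, h2⟩ := D.exists_two_mul_log_hellingerAffinity_eq hc hν
  have hconc := (D.F_concave (-φ) (D.F.neg_mem hφ)).2 ha hb hs ht hst
  have hA := D.two_mul_log_hellingerAffinity_le ha hν hφ
  have hB := D.two_mul_log_hellingerAffinity_le hb hν hφ
  simp only [smul_eq_mul] at hconc ⊢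
  rw [h1] at hA hB
  rw [h2] at hconc
  have hA' := mul_le_mul_of_nonneg_left hA hs
  have hB' := mul_le_mul_of_nonneg_left hB ht
  have : (s + t) * Real.log (hellingerAffinity D (s • a + t • b) ν)
      = Real.log (hellingerAffinity D (s • a + t • b) ν) := by rw [hst, one_mul]
  linarith

lemma continuousOn_hellingerAffinity [FiniteDimensional ℝ E] (hν : ν ∈ D.M) :
    ContinuousOn (fun μ => hellingerAffinity D μ ν) D.M := by
  have h := (D.concaveOn_log_hellingerAffinity hν).continuousOn D.M_open
  exact h.rexp.congr fun μ hμ => (Real.exp_log (D.hellingerAffinity_pos hμ hν)).symm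

lemma obsMeasure_apply_eq (hμ : μ ∈ D.M) {B : Set Ω} (hB : MeasurableSet B) :
    obsMeasure D μ B = ENNReal.ofReal (∫ ω in B, D.p μ ω ∂P) := by
  rw [obsMeasure, withDensity_apply _ hB,
    ofReal_integral_eq_lintegral_ofReal (D.integrable_p hμ).integrableOn
      (ae_of_all _ fun ω => (D.p_pos μ hμ ω).le)]

lemma isProbabilityMeasure_obsMeasure (hμ : μ ∈ D.M) :
    IsProbabilityMeasure (obsMeasure D μ) :=
  ⟨by rw [D.obsMeasure_apply_eq hμ MeasurableSet.univ, setIntegral_univ, D.p_prob μ hμ,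
    ENNReal.ofReal_one]⟩

lemma setIntegral_p_nonneg (hμ : μ ∈ D.M) (B : Set Ω) : 0 ≤ ∫ ω in B, D.p μ ω ∂P :=
  integral_nonneg fun ω => (D.p_pos μ hμ ω).le

lemma setIntegral_p_le_one (hμ : μ ∈ D.M) (B : Set Ω) : ∫ ω in B, D.p μ ω ∂P ≤ 1 := by
  rw [← D.p_prob μ hμ]
  exact setIntegral_le_integral (D.integrable_p hμ) (ae_of_all _ fun ω => (D.p_pos μ hμ ω).le)

/-- Distributions with affinity close to one are uniformly comparable on all events. -/
lemma setIntegral_p_le (hμ : μ ∈ D.M) (hν : ν ∈ D.M) (B : Set Ω) :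
    ∫ ω in B, D.p μ ω ∂P
      ≤ 2 * ∫ ω in B, D.p ν ω ∂P + 4 * (1 - hellingerAffinity D μ ν) := by
  have iμ := D.integrable_p hμ
  have iν := D.integrable_p hν
  have iμν := D.integrable_sqrt_mul_sqrt hμ hν
  have ih : Integrable (fun ω => 2 * (D.p μ ω + D.p ν ω - 2 * (√(D.p μ ω) * √(D.p ν ω)))) P :=
    ((iμ.add iν).sub (iμν.const_mul 2)).const_mul 2
  have hsq : ∀ ω, D.p μ ω + D.p ν ω - 2 * (√(D.p μ ω) * √(D.p ν ω))
      = (√(D.p μ ω) - √(D.p ν ω)) ^ 2 := fun ω => by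
    have h1 := Real.sq_sqrt (D.p_pos μ hμ ω).le
    have h2 := Real.sq_sqrt (D.p_pos ν hν ω).le
    linear_combination -h1 - h2
  have hI : ∫ ω, 2 * (D.p μ ω + D.p ν ω - 2 * (√(D.p μ ω) * √(D.p ν ω))) ∂P
      = 4 * (1 - hellingerAffinity D μ ν) := by
    rw [integral_const_mul, integral_sub (iμ.fun_add iν) (iμν.const_mul 2), integral_add iμ iν,
      integral_const_mul, D.p_prob μ hμ, D.p_prob ν hν, hellingerAffinity]
    ring
  calc ∫ ω in B, D.p μ ω ∂P
      ≤ ∫ ω in B, (2 * D.p ν ω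
          + 2 * (D.p μ ω + D.p ν ω - 2 * (√(D.p μ ω) * √(D.p ν ω)))) ∂P := by
        refine integral_mono iμ.integrableOn
          ((iν.const_mul 2).add ih).integrableOn fun ω => ?_
        have h1 := Real.sq_sqrt (D.p_pos μ hμ ω).le
        have h2 := Real.sq_sqrt (D.p_pos ν hν ω).le
        simp only
        nlinarith [sq_nonneg (√(D.p μ ω) - 2 * √(D.p ν ω))]
    _ = 2 * ∫ ω in B, D.p ν ω ∂P
          + ∫ ω in B, 2 * (D.p μ ω + D.p ν ω - 2 * (√(D.p μ ω) * √(D.p ν ω))) ∂P := by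
        rw [integral_add (iν.const_mul 2).integrableOn ih.integrableOn, integral_const_mul]
    _ ≤ _ := by
        rw [← hI]
        refine add_le_add_right (setIntegral_le_integral ih (ae_of_all _ fun ω => ?_)) _
        simp only [hsq, Pi.zero_apply]
        positivity

/-- Two hypotheses that can be tested with both error probabilities below `ε` have small
affinity. -/
lemma sq_hellingerAffinity_lt (hμ : μ ∈ D.M) (hν : ν ∈ D.M) {B : Set Ω} (hB : MeasurableSet B)
    {ε : ℝ} (h1 : ∫ ω in B, D.p μ ω ∂P < ε) (h2 : ∫ ω in Bᶜ, D.p ν ω ∂P < ε) :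
    hellingerAffinity D μ ν ^ 2 < 4 * ε := by
  have iμν := D.integrable_sqrt_mul_sqrt hμ hν
  have cs : ∀ C : Set Ω, (∫ ω in C, √(D.p μ ω) * √(D.p ν ω) ∂P) ^ 2
      ≤ (∫ ω in C, D.p μ ω ∂P) * ∫ ω in C, D.p ν ω ∂P := fun C => by
    have eμ : ∀ ω, √(D.p μ ω) ^ 2 = D.p μ ω := fun ω => Real.sq_sqrt (D.p_pos μ hμ ω).le
    have eν : ∀ ω, √(D.p ν ω) ^ 2 = D.p ν ω := fun ω => Real.sq_sqrt (D.p_pos ν hν ω).le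
    have h := sq_integral_mul_le (Q := P.restrict C) (u := fun ω => √(D.p μ ω))
      (v := fun ω => √(D.p ν ω))
      (by simpa only [eμ] using (D.integrable_p hμ).restrict)
      (by simpa only [eν] using (D.integrable_p hν).restrict) iμν.integrableOn
    simpa only [eμ, eν] using h
  have hsplit := integral_add_compl hB iμν
  have c1 : (∫ ω in B, √(D.p μ ω) * √(D.p ν ω) ∂P) ^ 2 < ε :=
    ((cs B).trans (mul_le_of_le_one_right (D.setIntegral_p_nonneg hμ B)
      (D.setIntegral_p_le_one hν B))).trans_lt h1
  have c2 : (∫ ω in Bᶜ, √(D.p μ ω) * √(D.p ν ω) ∂P) ^ 2 < ε :=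
    ((cs Bᶜ).trans (mul_le_of_le_one_left (D.setIntegral_p_nonneg hν Bᶜ)
      (D.setIntegral_p_le_one hμ Bᶜ))).trans_lt h2
  rw [hellingerAffinity, ← hsplit]
  nlinarith [sq_nonneg ((∫ ω in B, √(D.p μ ω) * √(D.p ν ω) ∂P)
    - ∫ ω in Bᶜ, √(D.p μ ω) * √(D.p ν ω) ∂P)]

/-- The laws indexed by a compact set of parameters are uniformly tight for any real-valued
Borel statistic. -/
lemma exists_forall_setIntegral_le [FiniteDimensional ℝ E] {K : Set E} (hK : IsCompact K)
    (hKM : K ⊆ D.M) {f : Ω → ℝ} (hf : Measurable f) {η : ℝ} (hη : 0 < η) :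
    ∃ N : ℕ, ∀ μ ∈ K, ∫ ω in {ω | (N : ℝ) < |f ω|}, D.p μ ω ∂P ≤ η := by
  have hmono : ∀ {N N' : ℕ}, N ≤ N' → ∀ μ ∈ D.M,
      ∫ ω in {ω | (N' : ℝ) < |f ω|}, D.p μ ω ∂P ≤ ∫ ω in {ω | (N : ℝ) < |f ω|}, D.p μ ω ∂P :=
    fun {N N'} hN μ hμ => setIntegral_mono_set (D.integrable_p hμ).integrableOn
      (ae_of_all _ fun ω => (D.p_pos μ hμ ω).le)
      (Filter.Eventually.of_forall fun ω (hω : (N' : ℝ) < |f ω|) =>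
        (show (N : ℝ) < |f ω| from lt_of_le_of_lt (by exact_mod_cast hN) hω))
  suffices h : ∃ N : ℕ, ∀ μ ∈ K, μ ∈ D.M → ∫ ω in {ω | (N : ℝ) < |f ω|}, D.p μ ω ∂P ≤ η from
    h.imp fun N hN μ hμ => hN μ hμ (hKM hμ)
  refine hK.induction_on
    (p := fun S => ∃ N : ℕ, ∀ μ ∈ S, μ ∈ D.M → ∫ ω in {ω | (N : ℝ) < |f ω|}, D.p μ ω ∂P ≤ η)
    ⟨0, by simp⟩ (fun S T hST => Exists.imp fun N hN μ hμ => hN μ (hST hμ)) ?_ ?_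
  · rintro S T ⟨N, hN⟩ ⟨N', hN'⟩
    refine ⟨max N N', fun μ hμ hM => ?_⟩
    rcases hμ with hμ | hμ
    · exact (hmono (le_max_left _ _) μ hM).trans (hN μ hμ hM)
    · exact (hmono (le_max_right _ _) μ hM).trans (hN' μ hμ hM)
  · intro ν hν
    have hνM := hKM hν
    have hlim : Filter.Tendsto (fun N : ℕ => ∫ ω in {ω | (N : ℝ) < |f ω|}, D.p ν ω ∂P)
        Filter.atTop (nhds 0) := by
      have h := tendsto_setIntegral_of_antitone (μ := P) (f := D.p ν)
        (s := fun N : ℕ => {ω | (N : ℝ) < |f ω|})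
        (fun N => measurableSet_lt measurable_const hf.abs)
        (fun N N' hN ω (hω : (N' : ℝ) < |f ω|) =>
          (show (N : ℝ) < |f ω| from lt_of_le_of_lt (by exact_mod_cast hN) hω))
        ⟨0, (D.integrable_p hνM).integrableOn⟩
      have hempty : ⋂ N : ℕ, {ω | (N : ℝ) < |f ω|} = ∅ := by
        refine Set.eq_empty_iff_forall_notMem.2 fun ω hω => ?_
        obtain ⟨N, hN⟩ := exists_nat_ge |f ω|
        exact absurd (Set.mem_iInter.1 hω N) (not_lt.2 hN)
      simpa [hempty] using h
    obtain ⟨N, hN⟩ := (hlim.eventually (gt_mem_nhds (show 0 < η / 4 by positivity))).exists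
    have hcont := (D.continuousOn_hellingerAffinity hνM).continuousAt (D.M_open.mem_nhds hνM)
    have hev : ∀ᶠ μ in nhds ν, 1 - η / 8 < hellingerAffinity D μ ν := by
      refine hcont.eventually (lt_mem_nhds ?_)
      simp only [D.hellingerAffinity_self hνM]
      linarith
    refine ⟨_, mem_nhdsWithin_of_mem_nhds hev, N, fun μ hμ hM => ?_⟩
    have := D.setIntegral_p_le hM hνM {ω | (N : ℝ) < |f ω|}
    replace hμ : 1 - η / 8 < hellingerAffinity D μ ν := hμ
    linarith

end GoodPair

/-- Every Borel estimate admits a finite error level on a compact parameter set. -/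
lemma exists_iSup_obsMeasure_lt [FiniteDimensional ℝ E] (D : GoodPair Ω P E)
    (A : (Fin n → ℝ) →ᵃ[ℝ] E) {X : Set (Fin n → ℝ)} (hX : IsCompact X)
    (hA : ∀ x ∈ X, A x ∈ D.M) (g : Fin n → ℝ) {ghat : Ω → ℝ} (hghat : Measurable ghat)
    {ε : ℝ} (hε : 0 < ε) :
    ∃ δ : ℝ, (⨆ x ∈ X, obsMeasure D (A x) {ω | δ < |ghat ω - g ⬝ᵥ x|}) < ENNReal.ofReal ε := by
  have hAX : IsCompact (A '' X) := hX.image A.continuous_of_finiteDimensional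
  obtain ⟨N, hN⟩ := D.exists_forall_setIntegral_le hAX (Set.image_subset_iff.2 hA) hghat
    (half_pos hε)
  obtain ⟨C, hC⟩ := hX.exists_bound_of_continuousOn (f := fun x => g ⬝ᵥ x)
    (by fun_prop)
  refine ⟨N + C, lt_of_le_of_lt (iSup₂_le fun x hx => ?_)
    ((ENNReal.ofReal_lt_ofReal_iff hε).2 (half_lt_self hε))⟩
  calc obsMeasure D (A x) {ω | N + C < |ghat ω - g ⬝ᵥ x|}
      ≤ obsMeasure D (A x) {ω | (N : ℝ) < |ghat ω|} := by
        refine measure_mono fun ω (hω : N + C < |ghat ω - g ⬝ᵥ x|) => ?_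
        have h1 := abs_sub (ghat ω) (g ⬝ᵥ x)
        have h2 : |g ⬝ᵥ x| ≤ C := hC x hx
        change (N : ℝ) < |ghat ω|
        linarith
    _ ≤ ENNReal.ofReal (ε / 2) := by
        rw [D.obsMeasure_apply_eq (hA x hx) (measurableSet_lt measurable_const hghat.abs)]
        exact ENNReal.ofReal_le_ofReal (hN _ (Set.mem_image_of_mem A hx))

/-- An estimate whose error exceeds `δ` with probability below `ε` separates only pairs of
points at distance at most `2δ`, up to the factor allowed by their affinity. -/
lemma mul_dotProduct_sub_le_of_iSup_lt (D : GoodPair Ω P E) (A : (Fin n → ℝ) →ᵃ[ℝ] E)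
    {X : Set (Fin n → ℝ)} (hXcv : Convex ℝ X) (hA : ∀ x ∈ X, A x ∈ D.M) (g : Fin n → ℝ)
    {ghat : Ω → ℝ} (hghat : Measurable ghat) {ε δ t : ℝ} (hε : 0 < ε)
    (hδ : (⨆ x ∈ X, obsMeasure D (A x) {ω | δ < |ghat ω - g ⬝ᵥ x|}) < ENNReal.ofReal ε)
    (ht0 : 0 ≤ t) (ht1 : t ≤ 1) {x y : Fin n → ℝ} (hx : x ∈ X) (hy : y ∈ X)
    (ht : Real.log (4 * ε) ≤ 2 * (t * Real.log (hellingerAffinity D (A x) (A y)))) :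
    t * (g ⬝ᵥ x - g ⬝ᵥ y) ≤ 2 * δ := by
  by_contra! hlt
  set z := t • x + (1 - t) • y with hz_def
  have hz : z ∈ X := hXcv hx hy ht0 (sub_nonneg.2 ht1) (by ring)
  have hAz : A z = t • A x + (1 - t) • A y :=
    Convex.combo_affine_apply (by ring)
  have hgz : g ⬝ᵥ z - g ⬝ᵥ y = t * (g ⬝ᵥ x - g ⬝ᵥ y) := by
    rw [hz_def, dotProduct_add, dotProduct_smul, dotProduct_smul]
    simp only [smul_eq_mul]
    ring
  have hmeas : ∀ w, MeasurableSet {ω | δ < |ghat ω - g ⬝ᵥ w|} := fun w =>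
    measurableSet_lt measurable_const (hghat.sub_const _).abs
  have herr : ∀ w ∈ X, ∫ ω in {ω | δ < |ghat ω - g ⬝ᵥ w|}, D.p (A w) ω ∂P < ε := fun w hw => by
    have h := (le_iSup₂ (f := fun x (_ : x ∈ X) =>
      obsMeasure D (A x) {ω | δ < |ghat ω - g ⬝ᵥ x|}) w hw).trans_lt hδ
    rw [D.obsMeasure_apply_eq (hA w hw) (hmeas w)] at h
    exact (ENNReal.ofReal_lt_ofReal_iff hε).1 h
  have hcompl : ∫ ω in {ω | δ < |ghat ω - g ⬝ᵥ z|}ᶜ, D.p (A y) ω ∂P < ε := by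
    refine lt_of_le_of_lt (setIntegral_mono_set (D.integrable_p (hA y hy)).integrableOn
      (ae_of_all _ fun ω => (D.p_pos _ (hA y hy) ω).le)
      (Filter.Eventually.of_forall fun ω hω => ?_)) (herr y hy)
    have hω' : |ghat ω - g ⬝ᵥ z| ≤ δ := not_lt.1 hω
    change δ < |ghat ω - g ⬝ᵥ y|
    refine lt_of_lt_of_le ?_ (le_abs_self _)
    linarith [(abs_le.1 hω').1]
  have hsq := D.sq_hellingerAffinity_lt (hA z hz) (hA y hy) (hmeas z) (herr z hz) hcompl
  have hpos := D.hellingerAffinity_pos (hA z hz) (hA y hy)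
  have hlog := Real.log_lt_log (pow_pos hpos 2) hsq
  have hconc := (D.concaveOn_log_hellingerAffinity (hA y hy)).2 (hA x hx) (hA y hy) ht0
    (sub_nonneg.2 ht1) (by ring)
  simp only [← hAz, D.hellingerAffinity_self (hA y hy), Real.log_one, smul_eq_mul, mul_zero,
    add_zero] at hconc
  rw [Real.log_pow] at hlog
  push_cast at hlog
  linarith

/-- For each `α`, the infimum over `φ` in the definition of `Φ_*` is attained. -/
lemma exists_phiFun_eq (D : GoodPair Ω P E) (A : (Fin n → ℝ) →ᵃ[ℝ] E) (g : Fin n → ℝ) (r : ℝ)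
    {x y : Fin n → ℝ} (hx : A x ∈ D.M) (hy : A y ∈ D.M) {α : ℝ} (hα : 0 < α) :
    ∃ φ ∈ D.F, PhiFun D A g r x y φ α
      = g ⬝ᵥ x - g ⬝ᵥ y + 2 * α * (Real.log (hellingerAffinity D (A x) (A y)) + r) := by
  obtain ⟨φ, hφ, h1, h2⟩ := D.exists_two_mul_log_hellingerAffinity_eq hx hy
  refine ⟨α • φ, D.F.smul_mem _ hφ, ?_⟩
  have e1 : ∀ ω, (α • φ) ω / α = φ ω := fun ω => by
    simp only [Pi.smul_apply, smul_eq_mul]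
    field_simp
  have e2 : ∀ ω, -(α • φ) ω / α = (-φ) ω := fun ω => by
    rw [neg_div, e1, Pi.neg_apply]
  simp only [PhiFun, e1, e2, h1, h2]
  ring

/-- **Lemma 3.2, inequality (3.3).** For every `ε ∈ (0, 1/4)`, the minimax optimal
risk satisfies `Risk_*(ε) ≥ [ln(1/(4ε)) / (2 ln(2/ε))] · Φ_*(ln(2/ε))`, where
`2Φ_*(r) = sup_{x,y∈X} inf_{φ∈F, α>0} Φ_r(x,y;φ,α)`. -/
theorem riskStar_ge_ratio_phiStar
    {Ω : Type*} [MeasurableSpace Ω] [TopologicalSpace Ω] [PolishSpace Ω] [BorelSpace Ω]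
    {P : Measure Ω} [SigmaFinite P] {m n : ℕ}
    (D : GoodPair Ω P (Fin m → ℝ))
    (X : Set (Fin n → ℝ)) (hXne : X.Nonempty) (hXcp : IsCompact X) (hXcv : Convex ℝ X)
    (A : (Fin n → ℝ) →ᵃ[ℝ] (Fin m → ℝ)) (hA : ∀ x ∈ X, A x ∈ D.M)
    (g : Fin n → ℝ) (ε : ℝ) (hε : ε ∈ Set.Ioo (0 : ℝ) (1/4)) :
    (Real.log (1 / (4 * ε)) / (2 * Real.log (2 / ε))) * PhiStarSI D A g X (Real.log (2 / ε))
      ≤ RiskStar D A g X ε := by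
  obtain ⟨hε0, hε4⟩ := hε
  set r := Real.log (2 / ε) with hr_def
  have hr : 0 < r := Real.log_pos (by rw [lt_div_iff₀ hε0]; linarith)
  have hlog4 : Real.log (1 / (4 * ε)) = -Real.log (4 * ε) := by rw [one_div, Real.log_inv]
  have hnum : 0 < Real.log (1 / (4 * ε)) := by
    refine Real.log_pos ?_
    rw [lt_div_iff₀ (by positivity)]
    linarith
  have hnum_le : Real.log (1 / (4 * ε)) ≤ r :=
    Real.log_le_log (by positivity) (by rw [div_le_div_iff₀ (by positivity) hε0]; linarith)
  set t := Real.log (1 / (4 * ε)) / (2 * r) with ht_def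
  have ht0 : 0 < t := by positivity
  have ht1 : t ≤ 1 := by
    rw [ht_def, div_le_one (by positivity)]
    linarith
  have htr : Real.log (4 * ε) = -(2 * (t * r)) := by
    have : t * (2 * r) = Real.log (1 / (4 * ε)) := div_mul_cancel₀ _ (by positivity)
    linarith
  refine le_csInf ⟨_, 0, measurable_const, rfl⟩ ?_
  rintro _ ⟨ghat, hghat, rfl⟩
  refine le_csInf (exists_iSup_obsMeasure_lt D A hXcp hA g hghat hε0) fun δ hδ => ?_
  have hsep : ∀ x ∈ X, ∀ y ∈ X, -r ≤ Real.log (hellingerAffinity D (A x) (A y)) →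
      t * (g ⬝ᵥ x - g ⬝ᵥ y) ≤ 2 * δ := fun x hx y hy h =>
    mul_dotProduct_sub_le_of_iSup_lt D A hXcv hA g hghat hε0 hδ ht0.le ht1 hx hy (by
      rw [htr]
      nlinarith)
  obtain ⟨x₀, hx₀⟩ := hXne
  have hδ0 : 0 ≤ δ := by
    have := hsep x₀ hx₀ x₀ hx₀ (by
      rw [D.hellingerAffinity_self (hA x₀ hx₀), Real.log_one]
      linarith)
    simpa using this
  suffices h : sSup {v : ℝ | ∃ x ∈ X, ∃ y ∈ X,
      v = sInf {w : ℝ | ∃ φ ∈ D.F, ∃ α : ℝ, 0 < α ∧ w = PhiFun D A g r x y φ α}}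
      ≤ 2 * δ / t by
    rw [le_div_iff₀ ht0] at h
    rw [PhiStarSI]
    linarith
  refine csSup_le ⟨_, x₀, hx₀, x₀, hx₀, rfl⟩ ?_
  rintro _ ⟨x, hx, y, hy, rfl⟩
  by_cases hbdd : BddBelow {w : ℝ | ∃ φ ∈ D.F, ∃ α : ℝ, 0 < α ∧ w = PhiFun D A g r x y φ α}
  swap
  · rw [Real.sInf_of_not_bddBelow hbdd]
    positivity
  set L := Real.log (hellingerAffinity D (A x) (A y)) + r with hL
  have hmem : ∀ α : ℝ, 0 < α → g ⬝ᵥ x - g ⬝ᵥ y + 2 * α * L ∈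
      {w : ℝ | ∃ φ ∈ D.F, ∃ α : ℝ, 0 < α ∧ w = PhiFun D A g r x y φ α} := fun α hα => by
    obtain ⟨φ, hφ, h⟩ := exists_phiFun_eq D A g r (hA x hx) (hA y hy) hα
    exact ⟨φ, hφ, α, hα, h.symm⟩
  have hL0 : 0 ≤ L := by
    by_contra! hneg
    obtain ⟨b, hb⟩ := hbdd
    have hα : 0 < (|g ⬝ᵥ x - g ⬝ᵥ y - b| + 1) / (2 * -L) :=
      div_pos (by positivity) (by linarith)
    have h := hb (hmem _ hα)
    have hcancel : 2 * ((|g ⬝ᵥ x - g ⬝ᵥ y - b| + 1) / (2 * -L)) * L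
        = -(|g ⬝ᵥ x - g ⬝ᵥ y - b| + 1) := by
      have := hneg.ne
      field_simp
    rw [hcancel] at h
    linarith [le_abs_self (g ⬝ᵥ x - g ⬝ᵥ y - b)]
  calc sInf {w : ℝ | ∃ φ ∈ D.F, ∃ α : ℝ, 0 < α ∧ w = PhiFun D A g r x y φ α}
      ≤ g ⬝ᵥ x - g ⬝ᵥ y := by
        refine le_of_forall_pos_le_add fun η hη => ?_
        have hα : 0 < η / (2 * (L + 1)) := by positivity
        refine (csInf_le hbdd (hmem _ hα)).trans ?_
        gcongr
        rw [mul_div_assoc', div_mul_eq_mul_div, div_le_iff₀ (by positivity)]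
        nlinarith
    _ ≤ 2 * δ / t := by
        rw [le_div_iff₀ ht0]
        linarith [hsep x hx y hy (by linarith)]
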